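/- arXiv:1709.06023 — 3 statements merged into one kernel-verified Lean document; each statement's English description precedes it below -/
import Mathlib

section
/- Suppose an algebra A has Day operations d_0,...,d_4 (witnessing 4-modularity). Then for every q ≥ 2 and all congruences α, β, γ of A, the algebra is (2^q − 1, 2^q)-modular: α ∩ (β ∘ (α∩γ) ∘ ⋯ ∘ β) with 2^q − 1 alternating factors is contained in (α∩β) ∘ (α∩γ) ∘ ⋯ with 2^q alternating factors. -/
/-- Relational composition: `rcomp R S a c ↔ ∃ b, R a b ∧ S b c`. -/
def rcomp {A : Type*} (R S : A → A → Prop) : A → A → Prop := fun a c => ∃ b, R a b ∧ S b c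

/-- Converse of a relation. -/
def rconv {A : Type*} (R : A → A → Prop) : A → A → Prop := fun a b => R b a

/-- Intersection of relations. -/
def rinter {A : Type*} (R S : A → A → Prop) : A → A → Prop := fun a b => R a b ∧ S a b

/-- Inclusion of relations. -/
def rsub {A : Type*} (R S : A → A → Prop) : Prop := ∀ a b, R a b → S a b

/-- Alternating composition with `m` factors, starting with `R`:
`altn R S m = R ∘ S ∘ R ∘ ⋯` (`m` factors, `m-1` occurrences of `∘`). -/
def altn {A : Type*} : (A → A → Prop) → (A → A → Prop) → ℕ → A → A → Prop
  | _, _, 0 => Eq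
  | R, S, m + 1 => rcomp R (altn S R m)

/-- Composition `T i ∘ T (i+1) ∘ ⋯ ∘ T (i+m-1)` of `m` relations starting at index `i`. -/
def chainFrom {A : Type*} (T : ℕ → A → A → Prop) : ℕ → ℕ → A → A → Prop
  | _, 0 => Eq
  | i, m + 1 => rcomp (T i) (chainFrom T (i + 1) m)

/-- The nested expression `A_ℓ`: `nest α β γ 1 = α∩(β ∘ (α∩γ) ∘ β)`, and
`nest α β γ (ℓ+1) = α∩(β ∘ (α ∩ nest α γ β ℓ) ∘ β)` (the inner one swaps `β` and `γ`). -/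
def nest {A : Type*} : (A → A → Prop) → (A → A → Prop) → (A → A → Prop) → ℕ → A → A → Prop
  | _, _, γ, 0 => γ
  | α, β, γ, ℓ + 1 => rinter α (rcomp β (rcomp (rinter α (nest α γ β ℓ)) β))

/-- A ternary operation preserves a relation. -/
def pres3 {A : Type*} (f : A → A → A → A) (R : A → A → Prop) : Prop :=
  ∀ a₁ a₂ a₃ b₁ b₂ b₃, R a₁ b₁ → R a₂ b₂ → R a₃ b₃ → R (f a₁ a₂ a₃) (f b₁ b₂ b₃)

/-- A quaternary operation preserves a relation. -/
def pres4 {A : Type*} (f : A → A → A → A → A) (R : A → A → Prop) : Prop :=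
  ∀ a₁ a₂ a₃ a₄ b₁ b₂ b₃ b₄, R a₁ b₁ → R a₂ b₂ → R a₃ b₃ → R a₄ b₄ →
    R (f a₁ a₂ a₃ a₄) (f b₁ b₂ b₃ b₄)

/-- Day equations for quaternary operations `d 0, …, d k`. -/
def DayEqs {A : Type*} (k : ℕ) (d : ℕ → A → A → A → A → A) : Prop :=
  (∀ i, i ≤ k → ∀ x y, d i x y y x = x) ∧
  (∀ x y z w, d 0 x y z w = x) ∧
  (∀ i, i < k → i % 2 = 0 → ∀ x w, d i x x w w = d (i + 1) x x w w) ∧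
  (∀ i, i < k → i % 2 = 1 → ∀ x y w, d i x y y w = d (i + 1) x y y w) ∧
  (∀ x y z w, d k x y z w = w)

/-- Jónsson equations for ternary operations `j 0, …, j (n+1)` witnessing `n+1`-distributivity. -/
def JonssonEqs {A : Type*} (n : ℕ) (j : ℕ → A → A → A → A) : Prop :=
  (∀ i, i ≤ n + 1 → ∀ x y, j i x y x = x) ∧
  (∀ x y z, j 0 x y z = x) ∧
  (∀ i, i ≤ n → i % 2 = 1 → ∀ x z, j i x z z = j (i + 1) x z z) ∧
  (∀ i, i ≤ n → i % 2 = 0 → ∀ x z, j i x x z = j (i + 1) x x z) ∧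
  (∀ x y z, j (n + 1) x y z = z)

/-- Gumm equations for ternary operations `p, j 1, …, j (n+1)`. -/
def GummEqs {A : Type*} (n : ℕ) (p : A → A → A → A) (j : ℕ → A → A → A → A) : Prop :=
  (∀ i, 1 ≤ i → i ≤ n + 1 → ∀ x y, j i x y x = x) ∧
  (∀ x z, p x z z = x) ∧
  (∀ x z, p x x z = j 1 x x z) ∧
  (∀ i, 1 ≤ i → i ≤ n → i % 2 = 1 → ∀ x z, j i x z z = j (i + 1) x z z) ∧
  (∀ i, 1 ≤ i → i ≤ n → i % 2 = 0 → ∀ x z, j i x x z = j (i + 1) x x z) ∧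
  (∀ x y z, j (n + 1) x y z = z)

/-- Defective Gumm equations: all Gumm equations except that `j n (x,y,x) = x` is not assumed. -/
def DefGummEqs {A : Type*} (n : ℕ) (p : A → A → A → A) (j : ℕ → A → A → A → A) : Prop :=
  (∀ i, 1 ≤ i → i ≤ n + 1 → i ≠ n → ∀ x y, j i x y x = x) ∧
  (∀ x z, p x z z = x) ∧
  (∀ x z, p x x z = j 1 x x z) ∧
  (∀ i, 1 ≤ i → i ≤ n → i % 2 = 1 → ∀ x z, j i x z z = j (i + 1) x z z) ∧
  (∀ i, 1 ≤ i → i ≤ n → i % 2 = 0 → ∀ x z, j i x x z = j (i + 1) x x z) ∧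
  (∀ x y z, j (n + 1) x y z = z)

theorem aux_altn_add {A : Type*} (m n : ℕ) : ∀ (R S : A → A → Prop) (a c : A),
    altn R S (m + n) a c ↔
      ∃ b, altn R S m a b ∧ (if m % 2 = 0 then altn R S n b c else altn S R n b c) := by
  induction m with
  | zero =>
    intro R S a c
    simp [altn]
  | succ m ih =>
    intro R S a c
    have e : m + 1 + n = (m + n) + 1 := by omega
    rw [e]
    simp only [altn, rcomp]
    constructor
    · rintro ⟨b, h1, h2⟩
      obtain ⟨x, h3, h4⟩ := (ih S R b c).1 h2
      refine ⟨x, ⟨b, h1, h3⟩, ?_⟩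
      rcases Nat.mod_two_eq_zero_or_one m with h | h
      · have : (m + 1) % 2 = 1 := by omega
        simpa [h, this] using h4
      · have : (m + 1) % 2 = 0 := by omega
        simpa [h, this] using h4
    · rintro ⟨x, ⟨b, h1, h3⟩, h4⟩
      refine ⟨b, h1, (ih S R b c).2 ⟨x, h3, ?_⟩⟩
      rcases Nat.mod_two_eq_zero_or_one m with h | h
      · have : (m + 1) % 2 = 1 := by omega
        simpa [h, this] using h4
      · have : (m + 1) % 2 = 0 := by omega
        simpa [h, this] using h4

def auxTh {A : Type*} (β δ : A → A → Prop) : ℕ → A → A → Prop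
  | 0 => β
  | n + 1 => rcomp (rcomp (auxTh β δ n) δ) (auxTh β δ n)

theorem aux_pow (n : ℕ) : ∃ k, 2 ^ (n + 1) = 2 * k + 2 := by
  have : 1 ≤ 2 ^ n := Nat.one_le_two_pow
  exact ⟨2 ^ n - 1, by rw [pow_succ]; omega⟩

theorem aux_altn_Th {A : Type*} (β δ : A → A → Prop) (n : ℕ) :
    ∀ a c, altn β δ (2 ^ (n + 1) - 1) a c → auxTh β δ n a c := by
  induction n with
  | zero =>
    intro a c h
    obtain ⟨b, h1, h2⟩ := h
    have h2 : b = c := h2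
    subst h2
    exact h1
  | succ n ih =>
    intro a c h
    obtain ⟨k, hk⟩ := aux_pow n
    have e : 2 ^ (n + 1 + 1) - 1 = (2 ^ (n + 1) - 1) + ((2 ^ (n + 1) - 1) + 1) := by
      rw [pow_succ 2 (n + 1)]; omega
    rw [e] at h
    obtain ⟨b, h1, h2⟩ := (aux_altn_add _ _ _ _ _ _).1 h
    rw [if_neg (by omega)] at h2
    obtain ⟨x, h3, h4⟩ := h2
    exact ⟨x, ⟨b, ih _ _ h1, h3⟩, ih _ _ h4⟩

theorem aux_pres_comp {A : Type*} {f : A → A → A → A → A} {R S : A → A → Prop}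
    (hR : pres4 f R) (hS : pres4 f S) : pres4 f (rcomp R S) := by
  rintro a₁ a₂ a₃ a₄ b₁ b₂ b₃ b₄ ⟨c₁, h1, k1⟩ ⟨c₂, h2, k2⟩ ⟨c₃, h3, k3⟩ ⟨c₄, h4, k4⟩
  exact ⟨f c₁ c₂ c₃ c₄, hR _ _ _ _ _ _ _ _ h1 h2 h3 h4, hS _ _ _ _ _ _ _ _ k1 k2 k3 k4⟩

theorem aux_Th_pres {A : Type*} {f : A → A → A → A → A} {β δ : A → A → Prop}
    (hβ : pres4 f β) (hδ : pres4 f δ) (n : ℕ) : pres4 f (auxTh β δ n) := by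
  induction n with
  | zero => exact hβ
  | succ n ih => exact aux_pres_comp (aux_pres_comp ih hδ) ih

theorem aux_Th_symm {A : Type*} {β δ : A → A → Prop}
    (hβ : ∀ a b, β a b → β b a) (hδ : ∀ a b, δ a b → δ b a) (n : ℕ) :
    ∀ a b, auxTh β δ n a b → auxTh β δ n b a := by
  induction n with
  | zero => exact hβ
  | succ n ih =>
    rintro a b ⟨y, ⟨x, h1, h2⟩, h3⟩
    exact ⟨x, ⟨y, ih _ _ h3, hδ _ _ h2⟩, ih _ _ h1⟩

/-- Representability of the tolerance. -/
theorem aux_Th_repr {A : Type*} {d : ℕ → A → A → A → A → A} {β δ : A → A → Prop}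
    (hβ : Equivalence β) (hδ : Equivalence δ)
    (hdβ : ∀ i, i ≤ 4 → pres4 (d i) β) (hdδ : ∀ i, i ≤ 4 → pres4 (d i) δ) (n : ℕ) :
    ∃ R : A → A → Prop, (∀ i, i ≤ 4 → pres4 (d i) R) ∧
      ∀ a b, auxTh β δ n a b ↔ ∃ u, R a u ∧ R b u := by
  cases n with
  | zero =>
    exact ⟨β, hdβ, fun a b => ⟨fun h => ⟨b, h, hβ.refl b⟩,
      fun ⟨u, h1, h2⟩ => hβ.trans h1 (hβ.symm h2)⟩⟩
  | succ n =>
    have hs := aux_Th_symm (fun a b => hβ.symm (x := a) (y := b))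
      (fun a b => hδ.symm (x := a) (y := b)) n
    refine ⟨rcomp (auxTh β δ n) δ,
      fun i hi => aux_pres_comp (aux_Th_pres (hdβ i hi) (hdδ i hi) n) (hdδ i hi),
      fun a b => ⟨?_, ?_⟩⟩
    · rintro ⟨y, h1, h3⟩
      exact ⟨y, h1, y, hs _ _ h3, hδ.refl y⟩
    · rintro ⟨u, ⟨x, h1, h2⟩, ⟨y, h3, h4⟩⟩
      exact ⟨y, ⟨x, h1, hδ.trans h2 (hδ.symm h4)⟩, hs _ _ h3⟩

theorem aux_step {A : Type*} (d : ℕ → A → A → A → A → A) (hday : DayEqs 4 d)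
    (α δ Θ R : A → A → Prop) (hα : Equivalence α) (hδ : Equivalence δ)
    (hδα : ∀ a b, δ a b → α a b)
    (hdα : ∀ i, i ≤ 4 → pres4 (d i) α)
    (hdδ : ∀ i, i ≤ 4 → pres4 (d i) δ)
    (hdR : ∀ i, i ≤ 4 → pres4 (d i) R)
    (hR : ∀ a b, Θ a b ↔ ∃ u, R a u ∧ R b u) (a b c e : A)
    (hae : α a e) (hab : Θ a b) (hbc : δ b c) (hce : Θ c e) :
    ∃ x y z, (rinter α Θ a x) ∧ δ x y ∧ (rinter α Θ y z) ∧ δ z e := by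
  obtain ⟨D1, D2, D3, D4, D5⟩ := hday
  obtain ⟨u, hau, hbu⟩ := (hR _ _).1 hab
  obtain ⟨v, hcv, hev⟩ := (hR _ _).1 hce
  have hA : ∀ i, i ≤ 4 → α a (d i a b c e) := by
    intro i hi
    have := hdα i hi a b b a a b c e (hα.refl a) (hα.refl b) (hδα _ _ hbc) hae
    rwa [D1 i hi] at this
  have hE : ∀ i, i < 4 → i % 2 = 0 → Θ (d i a b c e) (d (i + 1) a b c e) := by
    intro i hi h0
    refine (hR _ _).2 ⟨d i u u v v, hdR i (by omega) _ _ _ _ _ _ _ _ hau hbu hcv hev, ?_⟩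
    rw [D3 i hi h0]
    exact hdR (i + 1) (by omega) _ _ _ _ _ _ _ _ hau hbu hcv hev
  have hO : ∀ i, i < 4 → i % 2 = 1 → δ (d i a b c e) (d (i + 1) a b c e) := by
    intro i hi h0
    have h1 := hdδ i (by omega) a b b e a b c e (hδ.refl a) (hδ.refl b) hbc (hδ.refl e)
    have h2 := hdδ (i + 1) (by omega) a b b e a b c e (hδ.refl a) (hδ.refl b) hbc (hδ.refl e)
    rw [D4 i hi h0] at h1
    exact hδ.trans (hδ.symm h1) h2
  refine ⟨d 1 a b c e, d 2 a b c e, d 3 a b c e, ⟨hA 1 (by omega), ?_⟩,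
    hO 1 (by omega) rfl,
    ⟨hα.trans (hα.symm (hA 2 (by omega))) (hA 3 (by omega)), hE 2 (by omega) rfl⟩, ?_⟩
  · have := hE 0 (by omega) rfl
    rwa [D2] at this
  · have := hO 3 (by omega) rfl
    rwa [D5] at this

/-- Absorbing a trailing factor. -/
theorem aux_absorb {A : Type*} {P δ : A → A → Prop} (hδ : Equivalence δ) (k : ℕ) (a b c : A)
    (h : altn P δ (2 * k + 2) a b) (h' : δ b c) : altn P δ (2 * k + 2) a c := by
  have e : 2 * k + 2 = (2 * k + 1) + 1 := by omega
  rw [e] at h ⊢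
  obtain ⟨x, h1, h2⟩ := (aux_altn_add _ _ _ _ _ _).1 h
  refine (aux_altn_add _ _ _ _ _ _).2 ⟨x, h1, ?_⟩
  rw [if_neg (by omega)] at h2 ⊢
  obtain ⟨y, h3, h4⟩ := h2
  have h4 : y = b := h4
  subst h4
  exact ⟨c, hδ.trans h3 h', rfl⟩

/-- an algebra with Day operations `d 0, …, d 4` (4-modularity) is
`(2^q − 1, 2^q)`-modular for every `q ≥ 2`. -/
theorem stmt5 {A : Type*} (d : ℕ → A → A → A → A → A) (hday : DayEqs 4 d)
    (α β γ : A → A → Prop)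
    (hα : Equivalence α) (hβ : Equivalence β) (hγ : Equivalence γ)
    (hdα : ∀ i, i ≤ 4 → pres4 (d i) α)
    (hdβ : ∀ i, i ≤ 4 → pres4 (d i) β)
    (hdγ : ∀ i, i ≤ 4 → pres4 (d i) γ)
    (q : ℕ) (hq : 2 ≤ q) :
    rsub (rinter α (altn β (rinter α γ) (2 ^ q - 1)))
      (altn (rinter α β) (rinter α γ) (2 ^ q)) := by
  have hδ : Equivalence (rinter α γ) :=
    ⟨fun a => ⟨hα.refl a, hγ.refl a⟩, fun h => ⟨hα.symm h.1, hγ.symm h.2⟩,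
      fun h k => ⟨hα.trans h.1 k.1, hγ.trans h.2 k.2⟩⟩
  have hdδ : ∀ i, i ≤ 4 → pres4 (d i) (rinter α γ) := by
    intro i hi a₁ a₂ a₃ a₄ b₁ b₂ b₃ b₄ h1 h2 h3 h4
    exact ⟨hdα i hi _ _ _ _ _ _ _ _ h1.1 h2.1 h3.1 h4.1,
      hdγ i hi _ _ _ _ _ _ _ _ h1.2 h2.2 h3.2 h4.2⟩
  have key : ∀ n, ∀ a e, α a e → auxTh β (rinter α γ) n a e →
      altn (rinter α β) (rinter α γ) (2 ^ (n + 1)) a e := by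
    intro n
    induction n with
    | zero =>
      intro a e h1 h2
      exact ⟨e, ⟨h1, h2⟩, e, hδ.refl e, rfl⟩
    | succ n ih =>
      rintro a e h ⟨c, ⟨b, h1, h2⟩, h3⟩
      obtain ⟨R, hdR, hR⟩ := aux_Th_repr hβ hδ hdβ hdδ n
      obtain ⟨x, y, z, g1, g2, g3, g4⟩ := aux_step d hday α (rinter α γ) _ R hα hδ
        (fun _ _ h => h.1) hdα hdδ hdR hR a b c e h h1 h2 h3
      have f1 := ih _ _ g1.1 g1.2
      have f2 := ih _ _ g3.1 g3.2
      obtain ⟨k, hk⟩ := aux_pow n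
      rw [pow_succ 2 (n + 1), mul_two]
      rw [hk] at f1 f2 ⊢
      refine (aux_altn_add _ _ _ _ _ _).2 ⟨y, aux_absorb hδ k _ _ _ f1 g2, ?_⟩
      rw [if_pos (by omega)]
      exact aux_absorb hδ k _ _ _ f2 g4
  obtain ⟨n, rfl⟩ : ∃ n, q = n + 1 := ⟨q - 1, by omega⟩
  rintro a e ⟨h1, h2⟩
  exact key n a e h1 (aux_altn_Th _ _ n a e h2)
end

section
/- Let n be even and suppose an algebra A has Jónsson operations j_0, ..., j_{n+1} witnessing (n+1)-distributivity. Define quaternary operations d_0, ..., d_{2n} by d_{4i}(x,y,z,w) = j_{2i}(x,y,w), d_{4i+1}(x,y,z,w) = j_{2i+1}(x,y,w), d_{4i+2}(x,y,z,w) = j_{2i+1}(x,z,w), d_{4i+3}(x,y,z,w) = j_{2i+2}(x,z,w) for the appropriate range of i, with the final terms d_{2n−1}(x,y,z,w) = j_n(y,z,w) and d_{2n}(x,y,z,w) = w. Then d_0, ..., d_{2n} satisfy the Day equations, so A is 2n-modular. (Every (n+1)-distributive variety with n even is 2n-modular.) -/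
/-- if `n` is even and `j 0, …, j (n+1)` are Jónsson operations witnessing
`(n+1)`-distributivity, then the explicitly defined quaternary operations
`d 0, …, d (2n)` (with `d (4i) = j (2i) (x,y,w)`, `d (4i+1) = j (2i+1) (x,y,w)`,
`d (4i+2) = j (2i+1) (x,z,w)`, `d (4i+3) = j (2i+2) (x,z,w)`, overridden by
`d (2n−1) = j n (y,z,w)` and `d (2n) = w`) satisfy the Day equations, so the algebra
is `2n`-modular. -/
theorem stmt13 {A : Type*} (n : ℕ) (hn : Even n) (hn0 : 0 < n)
    (j : ℕ → A → A → A → A) (hj : JonssonEqs n j)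
    (d : ℕ → A → A → A → A → A)
    (hd : ∀ i x y z w, d i x y z w =
      if i = 2 * n then w
      else if i = 2 * n - 1 then j n y z w
      else if i % 4 = 0 then j (i / 2) x y w
      else if i % 4 = 1 then j ((i + 1) / 2) x y w
      else if i % 4 = 2 then j (i / 2) x z w
      else j ((i + 1) / 2) x z w) :
    DayEqs (2 * n) d := by
  obtain ⟨h1, h2, h3, h4, h5⟩ := hj
  obtain ⟨m, hm⟩ := hn
  have hlast : ∀ y w, j n y y w = w := fun y w => by
    rw [h4 n le_rfl (by omega), h5]
  have c0 : ∀ k, 4 * k < 2 * n → ∀ x y z w, d (4 * k) x y z w = j (2 * k) x y w := by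
    intro k hk x y z w
    rw [hd, if_neg (by omega), if_neg (by omega), if_pos (by omega)]
    congr 1; omega
  have c1 : ∀ k, 4 * k < 2 * n → ∀ x y z w, d (4 * k + 1) x y z w = j (2 * k + 1) x y w := by
    intro k hk x y z w
    rw [hd, if_neg (by omega), if_neg (by omega), if_neg (by omega), if_pos (by omega)]
    congr 1; omega
  have c2 : ∀ k, 4 * k < 2 * n → ∀ x y z w, d (4 * k + 2) x y z w = j (2 * k + 1) x z w := by
    intro k hk x y z w
    rw [hd, if_neg (by omega), if_neg (by omega), if_neg (by omega), if_neg (by omega),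
      if_pos (by omega)]
    congr 1; omega
  have c3 : ∀ k, 4 * k + 4 < 2 * n → ∀ x y z w, d (4 * k + 3) x y z w = j (2 * k + 2) x z w := by
    intro k hk x y z w
    rw [hd, if_neg (by omega), if_neg (by omega), if_neg (by omega), if_neg (by omega),
      if_neg (by omega)]
    congr 1; omega
  have cl : ∀ k, 4 * k + 4 = 2 * n → ∀ x y z w, d (4 * k + 3) x y z w = j n y z w := by
    intro k hk x y z w
    rw [hd, if_neg (by omega), if_pos (by omega)]
  have ce : ∀ i, i = 2 * n → ∀ x y z w, d i x y z w = w := by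
    intro i hi x y z w
    rw [hd, if_pos hi]
  refine ⟨?_, ?_, ?_, ?_, ce _ rfl⟩
  · intro i hi x y
    rcases Nat.lt_or_eq_of_le hi with hi | hi
    swap
    · exact ce i hi _ _ _ _
    obtain ⟨k, rfl | rfl | rfl | rfl⟩ :
      ∃ k, i = 4 * k ∨ i = 4 * k + 1 ∨ i = 4 * k + 2 ∨ i = 4 * k + 3 := ⟨i / 4, by omega⟩
    · rw [c0 k (by omega), h1 _ (by omega)]
    · rw [c1 k (by omega), h1 _ (by omega)]
    · rw [c2 k (by omega), h1 _ (by omega)]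
    · by_cases hk : 4 * k + 4 = 2 * n
      · rw [cl k hk, hlast]
      · rw [c3 k (by omega), h1 _ (by omega)]
  · intro x y z w
    exact (c0 0 (by omega) x y z w).trans (h2 _ _ _)
  · intro i hi hp x w
    obtain ⟨k, rfl | rfl⟩ : ∃ k, i = 4 * k ∨ i = 4 * k + 2 := ⟨i / 4, by omega⟩
    · rw [c0 k (by omega), c1 k (by omega), h4 _ (by omega) (by omega)]
    · rw [c2 k (by omega), h3 _ (by omega) (by omega)]
      by_cases hk : 4 * k + 4 = 2 * n
      · rw [cl k hk]
        congr 1; omega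
      · rw [c3 k (by omega)]
  · intro i hi hp x y w
    obtain ⟨k, rfl | rfl⟩ : ∃ k, i = 4 * k + 1 ∨ i = 4 * k + 3 := ⟨i / 4, by omega⟩
    · rw [c1 k (by omega), c2 k (by omega)]
    · by_cases hk : 4 * k + 4 = 2 * n
      · rw [cl k hk, hlast, ce _ hk]
      · rw [c3 k (by omega)]
        exact (c0 (k + 1) (by omega) x y y w).symm
end

section
/- Suppose an algebra A has Day operations d_0, ..., d_{2r} and Gumm operations p, j_1, ..., j_{n+1}. Then for all p', q ≥ 1 and all congruences α, β, γ of A, A is (z, w)-modular with z = 2^{p'} · 2^q − 1 and w = 2r^q + (2^q · 2^{p'+1} − 2^{q+2} − 2p' + 2)n: that is, α ∩ (β ∘_z (α∩γ)) ⊆ (α∩β) ∘_w (α∩γ). -/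
def IsCh {A : Type*} (R S : A → A → Prop) (m : ℕ) (c : ℕ → A) : Prop :=
  ∀ s, s < m → (s % 2 = 0 → R (c s) (c (s+1))) ∧ (s % 2 = 1 → S (c s) (c (s+1)))

theorem isCh_altn {A : Type*} (m : ℕ) : ∀ (R S : A → A → Prop) (c : ℕ → A),
    IsCh R S m c → altn R S m (c 0) (c m) := by
  induction m with
  | zero => intro R S c _; rfl
  | succ m ih =>
    intro R S c h
    refine ⟨c 1, (h 0 (by omega)).1 rfl, ?_⟩
    have := ih S R (fun s => c (s+1)) (fun s hs =>
      ⟨fun h0 => (h (s+1) (by omega)).2 (by omega), fun h0 => (h (s+1) (by omega)).1 (by omega)⟩)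
    exact this

theorem altn_isCh {A : Type*} (m : ℕ) : ∀ (R S : A → A → Prop) (x y : A),
    altn R S m x y → ∃ c : ℕ → A, c 0 = x ∧ c m = y ∧ IsCh R S m c := by
  induction m with
  | zero => intro R S x y h; exact ⟨fun _ => x, rfl, h, fun s hs => by omega⟩
  | succ m ih =>
    rintro R S x y ⟨u, hu, h⟩
    obtain ⟨c, h0, hm, hc⟩ := ih S R u y h
    refine ⟨fun s => Nat.casesOn s x c, rfl, hm, ?_⟩
    intro s hs
    cases s with
    | zero => exact ⟨fun _ => by simpa [h0] using hu, fun h => by omega⟩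
    | succ s => exact ⟨fun h0 => (hc s (by omega)).2 (by omega),
        fun h0 => (hc s (by omega)).1 (by omega)⟩

theorem altn_append {A : Type*} {R S : A → A → Prop} (k m : ℕ) : ∀ {x y z : A},
    altn R S (2*k) x y → altn R S m y z → altn R S (2*k+m) x z := by
  induction k with
  | zero => intro x y z h1 h2; cases h1; simpa using h2
  | succ k ih =>
    rintro x y z ⟨u, hu, v, hv, h⟩ h2
    have := ih h h2
    rw [show 2*(k+1)+m = (2*k+m)+1+1 by ring]
    exact ⟨u, hu, v, hv, this⟩

theorem altn_rev {A : Type*} {R S : A → A → Prop} (hR : ∀ x y, R x y → R y x)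
    (hS : ∀ x y, S x y → S y x) (k : ℕ) : ∀ {x y : A},
    altn R S (2*k) x y → altn S R (2*k) y x := by
  induction k with
  | zero => intro x y h; exact Eq.symm h
  | succ k ih =>
    rintro x y ⟨u, hu, v, hv, h⟩
    exact altn_append k 2 (ih h) ⟨u, hS _ _ hv, x, hR _ _ hu, rfl⟩

theorem altn_merge {A : Type*} {R S : A → A → Prop} (hR : ∀ x y z, R x y → R y z → R x z)
    (k m : ℕ) : ∀ {x y z : A},
    altn S R (2*k+2) x y → altn R S (m+1) y z → altn S R (2*k+2+m) x z := by
  induction k with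
  | zero =>
    rintro x y z ⟨u, hu, v, hv, rfl⟩ ⟨w, hw, h⟩
    rw [show 2*0+2+m = m+1+1 by ring]
    exact ⟨u, hu, w, hR _ _ _ hv hw, h⟩
  | succ k ih =>
    rintro x y z ⟨u, hu, v, hv, h⟩ h2
    have := ih h h2
    rw [show 2*(k+1)+2+m = (2*k+2+m)+1+1 by ring]
    exact ⟨u, hu, v, hv, this⟩

theorem isCh_rev {A : Type*} {R S : A → A → Prop} (hR : ∀ x y, R x y → R y x)
    (hS : ∀ x y, S x y → S y x) (m : ℕ) (hm : m % 2 = 1) (c : ℕ → A) (h : IsCh R S m c) :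
    IsCh R S m (fun s => c (m - s)) := by
  intro s hs
  have := h (m - (s+1)) (by omega)
  rw [show m - (s+1) + 1 = m - s by omega] at this
  exact ⟨fun h0 => hR _ _ (this.1 (by omega)), fun h0 => hS _ _ (this.2 (by omega))⟩

def Md {A : Type*} (α β δ : A → A → Prop) (m t : ℕ) : Prop :=
  ∀ c : ℕ → A, α (c 0) (c m) → IsCh β δ m c → altn (rinter α β) δ t (c 0) (c m)

theorem day_f {A : Type*} (T : A → A → Prop) (hT : Equivalence T) (f g : A → A → A → A → A)
    (hf : pres4 f T) (hg : pres4 g T) (hfg : ∀ x w, f x x w w = g x x w w) (l e : ℕ) (c : ℕ → A)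
    (hc : ∀ s, s < 4*l+3 → s % 2 = e → T (c s) (c (s+1))) :
    ∀ s, s < 2*l+1 → s % 2 = e →
      T (if s ≤ l then f (c s) (c (2*l+1-s)) (c (2*l+2+s)) (c (4*l+3-s))
          else g (c (2*l+1-s)) (c s) (c (4*l+3-s)) (c (2*l+2+s)))
        (if s+1 ≤ l then f (c (s+1)) (c (2*l+1-(s+1))) (c (2*l+2+(s+1))) (c (4*l+3-(s+1)))
          else g (c (2*l+1-(s+1))) (c (s+1)) (c (4*l+3-(s+1))) (c (2*l+2+(s+1)))) := by
  intro s hs he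
  have up : ∀ u v, v = u+1 → u < 4*l+3 → u % 2 = e → T (c u) (c v) := by
    rintro u v rfl h1 h2; exact hc u h1 h2
  have dn : ∀ u v, v = u+1 → u < 4*l+3 → u % 2 = e → T (c v) (c u) := fun u v h h1 h2 =>
    hT.symm (up u v h h1 h2)
  rcases lt_trichotomy s l with h | h | h
  · rw [if_pos (by omega), if_pos (by omega)]
    apply hf
    · exact up _ _ (by omega) (by omega) (by omega)
    · exact dn _ _ (by omega) (by omega) (by omega)
    · exact up _ _ (by omega) (by omega) (by omega)
    · exact dn _ _ (by omega) (by omega) (by omega)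
  · subst h
    rw [if_pos (by omega), if_neg (by omega)]
    rw [show 2*s+1-s = s+1 by omega, show 2*s+1-(s+1) = s by omega,
      show 4*s+3-(s+1) = 2*s+2+s by omega, show 2*s+2+(s+1) = 4*s+3-s by omega]
    have h1 : T (c s) (c (s+1)) := up _ _ (by omega) (by omega) (by omega)
    have h2 : T (c (2*s+2+s)) (c (4*s+3-s)) := up _ _ (by omega) (by omega) (by omega)
    refine hT.trans (y := f (c s) (c s) (c (4*s+3-s)) (c (4*s+3-s))) ?_ ?_
    · exact hf _ _ _ _ _ _ _ _ (hT.refl _) (hT.symm h1) h2 (hT.refl _)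
    · rw [hfg]
      exact hg _ _ _ _ _ _ _ _ (hT.refl _) h1 (hT.symm h2) (hT.refl _)
  · rw [if_neg (by omega), if_neg (by omega)]
    apply hg
    · exact dn _ _ (by omega) (by omega) (by omega)
    · exact up _ _ (by omega) (by omega) (by omega)
    · exact dn _ _ (by omega) (by omega) (by omega)
    · exact up _ _ (by omega) (by omega) (by omega)

theorem altn_absorb {A : Type*} {R S : A → A → Prop} (hS : ∀ x y z, S x y → S y z → S x z)
    (k : ℕ) {x y z : A} (h : altn R S (2*k+2) x y) (h2 : S y z) : altn R S (2*k+2) x z :=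
  altn_merge (R := S) (S := R) hS k 0 h ⟨z, h2, rfl⟩

theorem day_step {A : Type*} (r : ℕ) (d : ℕ → A → A → A → A → A) (hday : DayEqs (2 * r) d)
    (α β δ : A → A → Prop) (hα : Equivalence α) (hβ : Equivalence β) (hδ : Equivalence δ)
    (hδα : ∀ x y, δ x y → α x y)
    (hdα : ∀ i, i ≤ 2 * r → pres4 (d i) α)
    (hdβ : ∀ i, i ≤ 2 * r → pres4 (d i) β)
    (hdδ : ∀ i, i ≤ 2 * r → pres4 (d i) δ) (l k : ℕ)
    (H : Md α β δ (2*l+1) (2*k+2)) : Md α β δ (4*l+3) (r*(2*k+2)) := by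
  obtain ⟨d1, d2, d3, d4, d5⟩ := hday
  intro c hac hc
  have hbc : δ (c (2*l+1)) (c (2*l+2)) := (hc (2*l+1) (by omega)).2 (by omega)
  set a := c 0 with ha
  set b := c (2*l+1) with hb
  set b' := c (2*l+2) with hb'
  set z := c (4*l+3) with hz
  have eα : ∀ i, i ≤ 2*r → α (d i a b b' z) a := by
    intro i hi
    have := hdα i hi a b b' z a b b a (hα.refl _) (hα.refl _) (hα.symm (hδα _ _ hbc)) (hα.symm hac)
    rwa [d1 i hi] at this
  have ev : ∀ u, 2*u < 2*r → altn (rinter α β) δ (2*k+2) (d (2*u) a b b' z) (d (2*u+1) a b b' z) := by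
    intro u hu
    have h1 := H (fun s => if s ≤ l then d (2*u) (c s) (c (2*l+1-s)) (c (2*l+2+s)) (c (4*l+3-s))
          else d (2*u+1) (c (2*l+1-s)) (c s) (c (4*l+3-s)) (c (2*l+2+s)))
    have e0 : 2*l+2+(2*l+1) = 4*l+3 := by ring
    have e1 : 4*l+3-(2*l+1) = 2*l+2 := by omega
    have e2 : ¬ (2*l+1 ≤ l) := by omega
    simp only [Nat.zero_le, if_true, Nat.sub_zero, Nat.add_zero, Nat.sub_self, e0, e1, e2,
      if_false, ← ha, ← hb, ← hb', ← hz] at h1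
    refine h1 (hα.trans (eα _ (by omega)) (hα.symm (eα _ (by omega)))) ?_
    intro s hs
    constructor
    · exact day_f β hβ _ _ (hdβ _ (by omega)) (hdβ _ (by omega)) (d3 (2*u) hu (by omega)) l 0 c
        (fun s hs h => (hc s hs).1 h) s hs
    · exact day_f δ hδ _ _ (hdδ _ (by omega)) (hdδ _ (by omega)) (d3 (2*u) hu (by omega)) l 1 c
        (fun s hs h => (hc s hs).2 h) s hs
  have od : ∀ u, 2*u+1 < 2*r → δ (d (2*u+1) a b b' z) (d (2*u+2) a b b' z) := by
    intro u hu
    refine hδ.trans (y := d (2*u+1) a b b z) ?_ ?_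
    · exact hdδ _ (by omega) _ _ _ _ _ _ _ _ (hδ.refl _) (hδ.refl _) (hδ.symm hbc) (hδ.refl _)
    · rw [d4 (2*u+1) hu (by omega)]
      exact hdδ _ (by omega) _ _ _ _ _ _ _ _ (hδ.refl _) (hδ.refl _) hbc (hδ.refl _)
  have main : ∀ u, u ≤ r → altn (rinter α β) δ (u*(2*k+2)) (d 0 a b b' z) (d (2*u) a b b' z) := by
    intro u
    induction u with
    | zero => intro _; simp only [Nat.zero_mul, Nat.mul_zero]; rfl
    | succ u ih =>
      intro hu
      have h1 := altn_absorb (S := δ) (fun x y z h h' => hδ.trans h h') k (ev u (by omega)) (od u (by omega))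
      have h2 := ih (by omega)
      rw [show u*(2*k+2) = 2*(u*(k+1)) by ring] at h2
      have := altn_append _ _ h2 h1
      rwa [show (u+1)*(2*k+2) = 2*(u*(k+1)) + (2*k+2) by ring]
  have := main r le_rfl
  rwa [d2, d5] at this

theorem gumm_pre {A : Type*} (n : ℕ)
    (p : A → A → A → A) (j : ℕ → A → A → A → A) (hg : GummEqs n p j)
    (α β δ : A → A → Prop) (hα : Equivalence α) (hβ : Equivalence β) (hδ : Equivalence δ)
    (hδα : ∀ x y, δ x y → α x y)
    (hpα : pres3 p α) (hjα : ∀ i, 1 ≤ i → i ≤ n + 1 → pres3 (j i) α)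
    (hpβ : pres3 p β) (hjβ : ∀ i, 1 ≤ i → i ≤ n + 1 → pres3 (j i) β)
    (hpδ : pres3 p δ) (hjδ : ∀ i, 1 ≤ i → i ≤ n + 1 → pres3 (j i) δ) (l k : ℕ)
    (H : Md α β δ (2*l+1) (2*k+2)) :
    ∀ c : ℕ → A, α (c 0) (c (4*l+3)) → IsCh β δ (4*l+3) c →
      altn δ (rinter α β) (2*k+2 + 2*(2*l+1)*n) (c 0) (c (4*l+3)) := by
  obtain ⟨g1, g2, g3, g4, g5, g6⟩ := hg
  intro c hac hc
  have hbc : δ (c (2*l+1)) (c (2*l+2)) := (hc (2*l+1) (by omega)).2 (by omega)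
  set a := c 0 with ha
  set b := c (2*l+1) with hb
  set b' := c (2*l+2) with hb'
  set z := c (4*l+3) with hz
  have Rs : ∀ x y, rinter α β x y → rinter α β y x := fun x y h => ⟨hα.symm h.1, hβ.symm h.2⟩
  have Rt : ∀ x y z, rinter α β x y → rinter α β y z → rinter α β x z :=
    fun x y z h h' => ⟨hα.trans h.1 h'.1, hβ.trans h.2 h'.2⟩
  have Ss : ∀ x y, δ x y → δ y x := fun x y => hδ.symm
  -- first part
  have s1 : δ a (p a b b') := by
    have := hpδ a b b a b b' (hδ.refl _) (hδ.refl _) hbc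
    rwa [g2] at this
  have s2 : α a (p a a z) := by
    have := hpα a a a a a z (hα.refl _) (hα.refl _) hac
    rwa [g2] at this
  have s3 : altn (rinter α β) δ (2*k+2) (p a a z) (p a b b') := by
    have h1 := H (fun s => p a (c s) (c (4*l+3-s)))
    have e1 : 4*l+3-(2*l+1) = 2*l+2 := by omega
    simp only [Nat.sub_zero, e1, ← ha, ← hb, ← hb', ← hz] at h1
    refine h1 (hα.trans (hα.symm s2) (hδα _ _ s1)) ?_
    intro s hs
    have q1 := hc s (by omega)
    have q2 := hc (4*l+3-(s+1)) (by omega)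
    rw [show 4*l+3-(s+1)+1 = 4*l+3-s by omega] at q2
    exact ⟨fun h => hpβ _ _ _ _ _ _ (hβ.refl _) (q1.1 h) (hβ.symm (q2.1 (by omega))),
      fun h => hpδ _ _ _ _ _ _ (hδ.refl _) (q1.2 h) (hδ.symm (q2.2 (by omega)))⟩
  have s4 : altn δ (rinter α β) (2*k+2) a (j 1 a a z) := by
    rw [← g3]
    obtain ⟨u, hu, h⟩ := altn_rev Rs Ss (k+1) s3
    exact ⟨u, hδ.trans s1 hu, h⟩
  -- the j path
  have jα : ∀ i, 1 ≤ i → i ≤ n+1 → ∀ x, α (j i a x z) a := by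
    intro i h1 h2 x
    have := hjα i h1 h2 a x z a x a (hα.refl _) (hα.refl _) (hα.symm hac)
    rwa [g1 i h1 h2] at this
  have jc : ∀ i, 1 ≤ i → i ≤ n+1 → ∀ c' : ℕ → A, IsCh β δ (4*l+3) c' →
      altn (rinter α β) δ (4*l+3) (j i a (c' 0) z) (j i a (c' (4*l+3)) z) := by
    intro i h1 h2 c' hc'
    refine isCh_altn _ _ _ (fun s => j i a (c' s) z) ?_
    intro s hs
    exact ⟨fun h => ⟨hα.trans (jα i h1 h2 _) (hα.symm (jα i h1 h2 _)),
      hjβ i h1 h2 _ _ _ _ _ _ (hβ.refl _) ((hc' s hs).1 h) (hβ.refl _)⟩,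
      fun h => hjδ i h1 h2 _ _ _ _ _ _ (hδ.refl _) ((hc' s hs).2 h) (hδ.refl _)⟩
  have hcr := isCh_rev (fun x y => hβ.symm) Ss (4*l+3) (by omega) c hc
  have main : ∀ i, i ≤ n → altn δ (rinter α β) (2*k+2+2*(2*l+1)*i) a
      (if i % 2 = 0 then j (i+1) a a z else j (i+1) a z z) := by
    intro i
    induction i with
    | zero => intro _; simpa using s4
    | succ i ih =>
      intro hi
      have h1 := ih (by omega)
      rw [show 2*k+2+2*(2*l+1)*i = 2*(k+(2*l+1)*i)+2 by ring] at h1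
      rw [show 2*k+2+2*(2*l+1)*(i+1) = 2*(k+(2*l+1)*i)+2 + (4*l+2) by ring]
      rcases Nat.mod_two_eq_zero_or_one i with h | h
      · rw [if_pos h] at h1
        rw [if_neg (by omega), ← g4 (i+1) (by omega) hi (by omega)]
        exact altn_merge Rt _ _ h1 (jc (i+1) (by omega) (by omega) c hc)
      · rw [if_neg (by omega)] at h1
        rw [if_pos (by omega), ← g5 (i+1) (by omega) hi (by omega)]
        have := jc (i+1) (by omega) (by omega) _ hcr
        simp only [Nat.sub_zero, Nat.sub_self, ← ha, ← hz] at this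
        exact altn_merge Rt _ _ h1 this
  have h1 := main n le_rfl
  simp only [g6, ite_self] at h1
  exact h1

theorem gumm_step {A : Type*} (n : ℕ)
    (p : A → A → A → A) (j : ℕ → A → A → A → A) (hg : GummEqs n p j)
    (α β δ : A → A → Prop) (hα : Equivalence α) (hβ : Equivalence β) (hδ : Equivalence δ)
    (hδα : ∀ x y, δ x y → α x y)
    (hpα : pres3 p α) (hjα : ∀ i, 1 ≤ i → i ≤ n + 1 → pres3 (j i) α)
    (hpβ : pres3 p β) (hjβ : ∀ i, 1 ≤ i → i ≤ n + 1 → pres3 (j i) β)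
    (hpδ : pres3 p δ) (hjδ : ∀ i, 1 ≤ i → i ≤ n + 1 → pres3 (j i) δ) (l k : ℕ)
    (H : Md α β δ (2*l+1) (2*k+2)) : Md α β δ (4*l+3) (2*k+2 + 2*(2*l+1)*n) := by
  intro c hac hc
  have hcr := isCh_rev (fun x y => hβ.symm) (fun x y => hδ.symm) (4*l+3) (by omega) c hc
  have h := gumm_pre n p j hg α β δ hα hβ hδ hδα hpα hjα hpβ hjβ hpδ hjδ l k H _
    (by simpa using hα.symm hac) hcr
  simp only [Nat.sub_zero, Nat.sub_self] at h
  rw [show 2*k+2+2*(2*l+1)*n = 2*(k+1+(2*l+1)*n) by ring] at h ⊢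
  exact altn_rev (fun x y h => hδ.symm h)
    (fun x y (h : rinter α β x y) => ⟨hα.symm h.1, hβ.symm h.2⟩) _ h

/-- an algebra with Day operations `d 0, …, d (2r)` and Gumm operations
`p, j 1, …, j (n+1)` is `(z, w)`-modular with `z = 2^{p'} · 2^q − 1` and
`w = 2r^q + (2^q·2^{p'+1} − 2^{q+2} − 2p' + 2)n`
(= `2r^q + ((2^{p'+1} − 4)(2^q − 1) + (2^{p'+1} − 2p' − 2))n`), for all `p', q ≥ 1`. -/
theorem stmt18 {A : Type*} (r n : ℕ) (hr : 1 ≤ r)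
    (d : ℕ → A → A → A → A → A) (hday : DayEqs (2 * r) d)
    (p : A → A → A → A) (j : ℕ → A → A → A → A) (hg : GummEqs n p j)
    (α β γ : A → A → Prop)
    (hα : Equivalence α) (hβ : Equivalence β) (hγ : Equivalence γ)
    (hdα : ∀ i, i ≤ 2 * r → pres4 (d i) α)
    (hdβ : ∀ i, i ≤ 2 * r → pres4 (d i) β)
    (hdγ : ∀ i, i ≤ 2 * r → pres4 (d i) γ)
    (hpα : pres3 p α) (hjα : ∀ i, 1 ≤ i → i ≤ n + 1 → pres3 (j i) α)
    (hpβ : pres3 p β) (hjβ : ∀ i, 1 ≤ i → i ≤ n + 1 → pres3 (j i) β)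
    (hpγ : pres3 p γ) (hjγ : ∀ i, 1 ≤ i → i ≤ n + 1 → pres3 (j i) γ)
    (p' q : ℕ) (hp' : 1 ≤ p') (hq : 1 ≤ q) :
    rsub (rinter α (altn β (rinter α γ) (2 ^ p' * 2 ^ q - 1)))
      (altn (rinter α β) (rinter α γ)
        (2 * r ^ q +
          ((2 ^ (p' + 1) - 4) * (2 ^ q - 1) + (2 ^ (p' + 1) - 2 * p' - 2)) * n)) := by
  have hδ : Equivalence (rinter α γ) := ⟨fun x => ⟨hα.refl x, hγ.refl x⟩,
    fun h => ⟨hα.symm h.1, hγ.symm h.2⟩, fun h h' => ⟨hα.trans h.1 h'.1, hγ.trans h.2 h'.2⟩⟩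
  have hδα : ∀ x y, rinter α γ x y → α x y := fun x y h => h.1
  have p3 : ∀ f, pres3 f α → pres3 f γ → pres3 f (rinter α γ) :=
    fun f h h' _ _ _ _ _ _ x y z => ⟨h _ _ _ _ _ _ x.1 y.1 z.1, h' _ _ _ _ _ _ x.2 y.2 z.2⟩
  have p4 : ∀ f, pres4 f α → pres4 f γ → pres4 f (rinter α γ) :=
    fun f h h' _ _ _ _ _ _ _ _ x y z w =>
      ⟨h _ _ _ _ _ _ _ _ x.1 y.1 z.1 w.1, h' _ _ _ _ _ _ _ _ x.2 y.2 z.2 w.2⟩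
  have D : ∀ q, Md α β (rinter α γ) (2*(2^q-1)+1) (2*(r^q-1)+2) := by
    intro q
    induction q with
    | zero =>
      intro c hac hc
      exact ⟨c 1, ⟨hac, (hc 0 (by simp)).1 rfl⟩, c 1, hδ.refl _, rfl⟩
    | succ q ih =>
      have := day_step r d hday α β (rinter α γ) hα hβ hδ hδα hdα hdβ
        (fun i hi => p4 _ (hdα i hi) (hdγ i hi)) _ _ ih
      have h2 : 1 ≤ 2^q := Nat.one_le_two_pow
      have h3 : 1 ≤ r^q := Nat.one_le_pow _ _ hr
      have h4 : 1 ≤ r^(q+1) := Nat.one_le_pow _ _ hr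
      rw [show 2*(2^(q+1)-1)+1 = 4*(2^q-1)+3 by rw [pow_succ]; omega,
        show 2*(r^(q+1)-1)+2 = r*(2*(r^q-1)+2) by
          rw [show 2*(r^(q+1)-1)+2 = 2*r^(q+1) by omega, show 2*(r^q-1)+2 = 2*r^q by omega]
          ring]
      exact this
  have h2 : 1 ≤ 2^q := Nat.one_le_two_pow
  have h3 : 1 ≤ r^q := Nat.one_le_pow _ _ hr
  have G : Md α β (rinter α γ) (2 ^ p' * 2 ^ q - 1) (2 * r ^ q +
          ((2 ^ (p' + 1) - 4) * (2 ^ q - 1) + (2 ^ (p' + 1) - 2 * p' - 2)) * n) := by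
    induction p', hp' using Nat.le_induction with
    | base =>
      have := D q
      rw [show 2*(2^q-1)+1 = 2^1*2^q-1 by omega, show 2*(r^q-1)+2 = 2*r^q by omega] at this
      simpa using this
    | succ p' hp ih =>
      obtain ⟨Q, hQ⟩ : ∃ Q, 2^q = Q+1 := ⟨2^q-1, by omega⟩
      have hpp : p' + 1 ≤ 2^p' := Nat.lt_two_pow_self
      obtain ⟨P, hP⟩ : ∃ P, 2^p' = P+p'+1 := ⟨2^p'-(p'+1), by omega⟩
      obtain ⟨p0, rfl⟩ : ∃ p0, p' = p0+1 := ⟨p'-1, by omega⟩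
      have hev : (2^(p0+1) * 2^q) % 2 = 0 := by rw [pow_succ]; simp [Nat.mul_mod]
      have hpos : 0 < 2^(p0+1) * 2^q := by positivity
      obtain ⟨l, hl⟩ : ∃ l, 2^(p0+1) * 2^q = 2*l+2 := ⟨2^(p0+1)*2^q/2-1, by omega⟩
      have e1 : 2^(p0+1)*2^q-1 = 2*l+1 := by omega
      have e2 : 2^(p0+1+1)*2^q-1 = 4*l+3 := by
        have : 2^(p0+1+1)*2^q = 2*(2^(p0+1)*2^q) := by ring
        omega
      have e3 : 2^(p0+1+1) = 2*P+2*p0+4 := by rw [pow_succ _ (p0+1), hP]; ring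
      have e4 : 2^(p0+1+1+1) = 4*P+4*p0+8 := by rw [pow_succ _ (p0+1+1), e3]; ring
      have hw : ∃ k, 2 * r ^ q + ((2 ^ (p0+1 + 1) - 4) * (2 ^ q - 1)
          + (2 ^ (p0+1 + 1) - 2 * (p0+1) - 2)) * n = 2*k+2 := by
        obtain ⟨B, hB⟩ : ∃ B, r^q = B+1 := ⟨r^q-1, by omega⟩
        refine ⟨B + ((P+p0)*Q+P)*n, ?_⟩
        rw [e3, hB, hQ, show 2*P+2*p0+4-4 = 2*(P+p0) by omega,
          show 2*P+2*p0+4-2*(p0+1)-2 = 2*P by omega, show Q+1-1 = Q by omega]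
        ring
      obtain ⟨k, hk⟩ := hw
      rw [e1, hk] at ih
      have := gumm_step n p j hg α β (rinter α γ) hα hβ hδ hδα hpα hjα hpβ hjβ
        (p3 _ hpα hpγ) (fun i h1 h2 => p3 _ (hjα i h1 h2) (hjγ i h1 h2)) l k ih
      rw [← hk] at this
      rw [e2]
      convert this using 1
      rw [e3, e4, hQ, show 2*P+2*p0+4-4 = 2*(P+p0) by omega,
          show 2*P+2*p0+4-2*(p0+1)-2 = 2*P by omega, show Q+1-1 = Q by omega,
          show 4*P+4*p0+8-4 = 4*(P+p0+1) by omega,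
          show 4*P+4*p0+8-2*(p0+1+1)-2 = 4*P+2*p0+2 by omega]
      have hl2 : 2*l+1 = (P+p0+2)*Q + (P+p0+1) := by
        rw [hP, hQ] at hl
        have : 2*l+2 = (P+p0+2)*Q + (P+p0+1) + 1 := by rw [← hl]; ring
        omega
      rw [hl2]
      ring
  rintro x y ⟨hxy, h⟩
  obtain ⟨c, rfl, rfl, hc⟩ := altn_isCh _ _ _ _ _ h
  exact G c hxy hc
end
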